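/- arXiv:1404.5365 — 2 statements merged into one kernel-verified Lean document; each statement's English description precedes it below -/
import Mathlib

section
/- There exists a C¹-smooth convex function F : ℝ³ → ℝ such that for i = 1, 2, 3 and all u ∈ ℝ³, ∂F/∂u_i(u) = a_i(e^{u₁}, e^{u₂}, e^{u₃}), and such that F(u + (k, k, k)) = F(u) + kπ for all u ∈ ℝ³ and all k ∈ ℝ. -/
/-- The inner angle, opposite the edge of length `x i`, of the generalized Euclidean
triangle of edge lengths `x 0, x 1, x 2` (clamped arccos convention). -/
noncomputable def ang (i : Fin 3) (x : Fin 3 → ℝ) : ℝ :=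
  Real.arccos (((x (i + 1)) ^ 2 + (x (i + 2)) ^ 2 - (x i) ^ 2) / (2 * x (i + 1) * x (i + 2)))

/-!
Let `L` be the primitive of `log ∘ sin` vanishing at `0`. The potential is the value at the angles
`a(u)` of `p ↦ ∑ pᵢ uᵢ - ∑ L(pᵢ)`. On the simplex of angle triples `p` this function is concave,
since the Hessian of `∑ L(pᵢ)` is the form `∑ dᵢ² cot pᵢ`, which is nonnegative on `∑ dᵢ = 0`; by
the law of sines its critical point is the triple `a(u)` when the lengths `exp uᵢ` satisfy the
strict triangle inequalities. Approximating from there, `a(u)` is a maximum point for every `u`.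
Hence the potential is a Legendre transform and `a(u)` is a subgradient of it at `u`, and a function
with a continuous subgradient field is convex and `C¹`.
-/

open Real Set

section Subgradient

theorem convexOn_of_subgradient {E : Type*} [AddCommGroup E] [Module ℝ E] {s : Set E} {f : E → ℝ}
    {D : E → E →ₗ[ℝ] ℝ} (hs : Convex ℝ s) (hf : ∀ x ∈ s, ∀ y ∈ s, f x + D x (y - x) ≤ f y) :
    ConvexOn ℝ s f := by
  refine ⟨hs, fun x hx y hy a b ha hb hab => ?_⟩
  set z := a • x + b • y with hz
  have hzs : z ∈ s := hs hx hy ha hb hab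
  have hcancel : a * D z (x - z) + b * D z (y - z) = 0 := by
    have : a • (x - z) + b • (y - z) = 0 := by
      rw [smul_sub, smul_sub, sub_add_sub_comm, ← add_smul, hab, one_smul, ← hz, sub_self]
    simpa only [map_add, map_smul, smul_eq_mul, map_zero] using congrArg (D z) this
  calc f z = (a + b) * f z := by rw [hab, one_mul]
    _ = a * (f z + D z (x - z)) + b * (f z + D z (y - z)) := by linear_combination -hcancel
    _ ≤ a • f x + b • f y := by
      simp only [smul_eq_mul]
      gcongr
      exacts [hf z hzs x hx, hf z hzs y hy]

theorem hasFDerivAt_of_continuousAt_subgradient {E : Type*} [NormedAddCommGroup E]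
    [NormedSpace ℝ E] {f : E → ℝ} {D : E → E →L[ℝ] ℝ} {x : E}
    (hf : ∀ x y, f x + D x (y - x) ≤ f y) (hD : ContinuousAt D x) : HasFDerivAt f (D x) x := by
  rw [hasFDerivAt_iff_isLittleO, Asymptotics.isLittleO_iff]
  intro c hc
  filter_upwards [hD.eventually (Metric.ball_mem_nhds _ hc)] with y hy
  have hlower : 0 ≤ f y - f x - D x (y - x) := by linarith [hf x y]
  have hupper : f y - f x - D x (y - x) ≤ (D y - D x) (y - x) := by
    have hyx := hf y x
    rw [← neg_sub y x, map_neg] at hyx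
    rw [sub_apply]
    linarith
  calc ‖f y - f x - D x (y - x)‖ = f y - f x - D x (y - x) := Real.norm_of_nonneg hlower
    _ ≤ (D y - D x) (y - x) := hupper
    _ ≤ ‖D y - D x‖ * ‖y - x‖ := (le_abs_self _).trans ((D y - D x).le_opNorm _)
    _ ≤ c * ‖y - x‖ := by
      gcongr
      exact (mem_ball_iff_norm.1 hy).le

theorem contDiff_one_of_continuous_subgradient {E : Type*} [NormedAddCommGroup E]
    [NormedSpace ℝ E] {f : E → ℝ} {D : E → E →L[ℝ] ℝ}
    (hf : ∀ x y, f x + D x (y - x) ≤ f y) (hD : Continuous D) : ContDiff ℝ 1 f :=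
  contDiff_one_iff_hasFDerivAt.2
    ⟨D, hD, fun _ => hasFDerivAt_of_continuousAt_subgradient hf hD.continuousAt⟩

end Subgradient

section Triangle

theorem fin_three_add_add (i : Fin 3) :
    i + 1 + 1 = i + 2 ∧ i + 1 + 2 = i ∧ i + 2 + 1 = i ∧ i + 2 + 2 = i + 1 := by
  grind

/-- The strict triangle inequalities for a triple of edge lengths. They force the lengths to be
positive, see `IsTriangle.pos`. -/
def IsTriangle (x : Fin 3 → ℝ) : Prop := ∀ i, x i < x (i + 1) + x (i + 2)

theorem IsTriangle.pos {x : Fin 3 → ℝ} (hx : IsTriangle x) (i : Fin 3) : 0 < x i := by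
  have h₀ := hx 0
  have h₁ := hx 1
  have h₂ := hx 2
  simp only [Fin.isValue, Fin.reduceAdd] at h₀ h₁ h₂
  fin_cases i <;> simp only [Fin.isValue, Fin.reduceFinMk, Fin.zero_eta, Fin.mk_one] <;> linarith

theorem ang_nonneg (i : Fin 3) (x : Fin 3 → ℝ) : 0 ≤ ang i x := arccos_nonneg _

theorem ang_smul {c : ℝ} (hc : c ≠ 0) (i : Fin 3) (x : Fin 3 → ℝ) : ang i (c • x) = ang i x := by
  simp only [ang, Pi.smul_apply, smul_eq_mul]
  congr 1
  rw [← mul_div_mul_left _ (2 * x (i + 1) * x (i + 2)) (pow_ne_zero 2 hc)]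
  ring

theorem continuousOn_ang (i : Fin 3) : ContinuousOn (ang i) {x | ∀ j, x j ≠ 0} := by
  refine continuous_arccos.comp_continuousOn (ContinuousOn.div (by fun_prop) (by fun_prop) ?_)
  exact fun x hx => mul_ne_zero (mul_ne_zero two_ne_zero (hx _)) (hx _)

theorem IsTriangle.cos_formula_mem_Ioo {x : Fin 3 → ℝ} (hx : IsTriangle x) (i : Fin 3) :
    (x (i + 1) ^ 2 + x (i + 2) ^ 2 - x i ^ 2) / (2 * x (i + 1) * x (i + 2)) ∈ Ioo (-1) 1 := by
  have hi := hx.pos i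
  have hj := hx.pos (i + 1)
  have hk := hx.pos (i + 2)
  have h₀ := hx i
  have h₁ := hx (i + 1)
  have h₂ := hx (i + 2)
  simp only [fin_three_add_add] at h₁ h₂
  constructor
  · rw [lt_div_iff₀ (by positivity)]
    nlinarith
  · rw [div_lt_iff₀ (by positivity)]
    nlinarith [mul_pos (sub_pos.2 h₁) (sub_pos.2 h₂)]

theorem IsTriangle.cos_ang {x : Fin 3 → ℝ} (hx : IsTriangle x) (i : Fin 3) :
    cos (ang i x) = (x (i + 1) ^ 2 + x (i + 2) ^ 2 - x i ^ 2) / (2 * x (i + 1) * x (i + 2)) :=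
  cos_arccos (hx.cos_formula_mem_Ioo i).1.le (hx.cos_formula_mem_Ioo i).2.le

/-- The edge lengths of a triple of points, indexed by the opposite vertex. They realize abstract
edge lengths by an actual triangle, to which the theorems of plane geometry apply. -/
noncomputable def sideLengths {X : Type*} [Dist X] (P : Fin 3 → X) (i : Fin 3) : ℝ :=
  dist (P (i + 1)) (P (i + 2))

theorem ang_sideLengths {V X : Type*} [NormedAddCommGroup V] [InnerProductSpace ℝ V]
    [MetricSpace X] [NormedAddTorsor V X] (P : Fin 3 → X) (i : Fin 3) :
    ang i (sideLengths P) = EuclideanGeometry.angle (P (i + 1)) (P i) (P (i + 2)) := by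
  rw [ang, EuclideanGeometry.angle, InnerProductGeometry.angle,
    real_inner_eq_norm_mul_self_add_norm_mul_self_sub_norm_sub_mul_self_div_two,
    vsub_sub_vsub_cancel_right]
  simp only [← dist_eq_norm_vsub, sideLengths, fin_three_add_add, dist_comm (P i) (P (i + 1))]
  congr 1
  ring

theorem IsTriangle.exists_sideLengths_eq {x : Fin 3 → ℝ} (hx : IsTriangle x) :
    ∃ P : Fin 3 → ℂ, sideLengths P = x := by
  have h₀ := hx.pos 0
  have h₁ := hx.pos 1
  have h₂ := hx.pos 2
  refine ⟨![0, x 2, x 1 * Complex.exp (ang 0 x * Complex.I)], funext fun i => ?_⟩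
  fin_cases i
  · have hcos : 2 * x 1 * x 2 * cos (ang 0 x) = x 1 ^ 2 + x 2 ^ 2 - x 0 ^ 2 := by
      rw [hx.cos_ang 0, zero_add, zero_add]
      field_simp
    have hsq : ‖(x 2 : ℂ) - x 1 * Complex.exp (ang 0 x * Complex.I)‖ ^ 2 = x 0 ^ 2 := by
      rw [Complex.sq_norm, Complex.normSq_apply]
      simp only [Complex.sub_re, Complex.sub_im, Complex.mul_re, Complex.mul_im, Complex.ofReal_re,
        Complex.ofReal_im, Complex.exp_ofReal_mul_I_re, Complex.exp_ofReal_mul_I_im]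
      linear_combination -hcos + x 1 ^ 2 * sin_sq_add_cos_sq (ang 0 x)
    simpa [sideLengths, Complex.dist_eq] using
      (pow_left_inj₀ (norm_nonneg _) h₀.le two_ne_zero).1 hsq
  · simp [sideLengths, Complex.norm_exp, abs_of_pos h₁]
  · simp [sideLengths, Complex.dist_eq, abs_of_pos h₂]

theorem IsTriangle.sum_ang {x : Fin 3 → ℝ} (hx : IsTriangle x) : ∑ i, ang i x = π := by
  obtain ⟨P, rfl⟩ := hx.exists_sideLengths_eq
  have hne : P 0 ≠ P 1 := dist_pos.1 (hx.pos 2)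
  simp only [ang_sideLengths (V := ℂ), Fin.sum_univ_three, Fin.isValue, Fin.reduceAdd]
  linarith [EuclideanGeometry.angle_add_angle_add_angle_eq_pi (P 2) hne,
    EuclideanGeometry.angle_comm (P 0) (P 1) (P 2)]

theorem IsTriangle.ang_mem_Ioo {x : Fin 3 → ℝ} (hx : IsTriangle x) (i : Fin 3) :
    ang i x ∈ Ioo 0 π := by
  refine ⟨arccos_pos.2 (hx.cos_formula_mem_Ioo i).2, lt_of_le_of_ne (arccos_le_pi _) fun h => ?_⟩
  have := (hx.cos_formula_mem_Ioo i).1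
  rw [ang, arccos_eq_pi] at h
  linarith

theorem IsTriangle.sin_ang_mul {x : Fin 3 → ℝ} (hx : IsTriangle x) (i : Fin 3) :
    sin (ang i x) * x (i + 1) = sin (ang (i + 1) x) * x i := by
  obtain ⟨P, rfl⟩ := hx.exists_sideLengths_eq
  simp only [ang_sideLengths (V := ℂ), sideLengths, fin_three_add_add]
  rw [dist_comm (P (i + 2)), EuclideanGeometry.law_sin, dist_comm (P (i + 2))]

theorem IsTriangle.exists_sin_ang_eq_mul {x : Fin 3 → ℝ} (hx : IsTriangle x) :
    ∃ K > 0, ∀ i, sin (ang i x) = K * x i := by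
  have h₀ := hx.pos 0
  refine ⟨sin (ang 0 x) / x 0, div_pos (sin_pos_of_mem_Ioo (hx.ang_mem_Ioo 0)) h₀, fun i => ?_⟩
  have h01 : sin (ang 0 x) * x 1 = sin (ang 1 x) * x 0 := hx.sin_ang_mul 0
  have h20 : sin (ang 2 x) * x 0 = sin (ang 0 x) * x 2 := hx.sin_ang_mul 2
  rw [div_mul_eq_mul_div, eq_div_iff h₀.ne']
  fin_cases i
  exacts [rfl, h01.symm, h20]

theorem ang_eq_single {x : Fin 3 → ℝ} (hpos : ∀ j, 0 < x j) {i : Fin 3}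
    (hi : x (i + 1) + x (i + 2) ≤ x i) : (fun j => ang j x) = Pi.single i π := by
  have h₀ := hpos i
  have h₁ := hpos (i + 1)
  have h₂ := hpos (i + 2)
  ext j
  obtain rfl | rfl | rfl : j = i ∨ j = i + 1 ∨ j = i + 2 := by grind
  · rw [Pi.single_eq_same, ang, arccos_eq_pi, div_le_iff₀ (by positivity)]
    nlinarith
  · rw [Pi.single_eq_of_ne (by simp), ang, arccos_eq_zero]
    simp only [fin_three_add_add]
    rw [le_div_iff₀ (by positivity)]
    nlinarith
  · rw [Pi.single_eq_of_ne (by simp), ang, arccos_eq_zero]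
    simp only [fin_three_add_add]
    rw [le_div_iff₀ (by positivity)]
    nlinarith

theorem sum_ang {x : Fin 3 → ℝ} (hpos : ∀ j, 0 < x j) : ∑ i, ang i x = π := by
  by_cases hx : IsTriangle x
  · exact hx.sum_ang
  · obtain ⟨i, hi⟩ : ∃ i, x (i + 1) + x (i + 2) ≤ x i := by simpa [IsTriangle] using hx
    simp [ang_eq_single hpos hi]

end Triangle

section AngleSimplex

/-- The closed simplex of nonnegative triples with sum `π`. It contains the angle triples of all
generalized triangles, see `angExp_mem_angleSimplex`. -/
def angleSimplex : Set (Fin 3 → ℝ) := {p | (∀ i, 0 ≤ p i) ∧ ∑ i, p i = π}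

/-- The relative interior of `angleSimplex`: the angle triples of nondegenerate triangles. -/
def openAngleSimplex : Set (Fin 3 → ℝ) := {p | (∀ i, 0 < p i) ∧ ∑ i, p i = π}

theorem mem_Ioo_of_mem_openAngleSimplex {a : Fin 3 → ℝ} (ha : a ∈ openAngleSimplex) (i : Fin 3) :
    a i ∈ Ioo 0 π := by
  refine ⟨ha.1 i, ha.2 ▸ ?_⟩
  exact Finset.single_lt_sum (j := i + 1) (by simp) (Finset.mem_univ _) (Finset.mem_univ _)
    (ha.1 _) fun k _ _ => (ha.1 k).le

theorem lineMap_mem_openAngleSimplex {a p : Fin 3 → ℝ} (ha : a ∈ openAngleSimplex)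
    (hp : p ∈ angleSimplex) {t : ℝ} (ht : t ∈ Ico 0 1) :
    AffineMap.lineMap a p t ∈ openAngleSimplex := by
  rw [AffineMap.lineMap_apply_module]
  refine ⟨fun i => add_pos_of_pos_of_nonneg (mul_pos (sub_pos.2 ht.2) (ha.1 i))
    (mul_nonneg ht.1 (hp.1 i)), ?_⟩
  simp only [Pi.add_apply, Pi.smul_apply, smul_eq_mul, Finset.sum_add_distrib, ← Finset.mul_sum,
    ha.2, hp.2]
  ring

theorem cot_add_cot_pos {a b : ℝ} (ha : 0 < a) (hb : 0 < b) (hab : a + b < π) :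
    0 < cot a + cot b := by
  have hsa : 0 < sin a := sin_pos_of_pos_of_lt_pi ha (by linarith)
  have hsb : 0 < sin b := sin_pos_of_pos_of_lt_pi hb (by linarith)
  have hsab : 0 < sin (a + b) := sin_pos_of_pos_of_lt_pi (add_pos ha hb) hab
  have : cot a + cot b = sin (a + b) / (sin a * sin b) := by
    rw [cot_eq_cos_div_sin, cot_eq_cos_div_sin, sin_add]
    field_simp
    ring
  rw [this]
  positivity

theorem cot_mul_cot_add_eq_one {a b c : ℝ} (ha : sin a ≠ 0) (hb : sin b ≠ 0) (hc : sin c ≠ 0)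
    (h : a + b + c = π) : cot a * cot b + cot b * cot c + cot c * cot a = 1 := by
  obtain rfl : c = π - (a + b) := by linarith
  rw [sin_pi_sub] at hc
  simp only [cot_eq_cos_div_sin, sin_pi_sub, cos_pi_sub]
  field_simp
  rw [sin_add, cos_add]
  ring

theorem sum_sq_mul_cot_nonneg {a d : Fin 3 → ℝ} (ha : a ∈ openAngleSimplex) (hd : ∑ i, d i = 0) :
    0 ≤ ∑ i, d i ^ 2 * cot (a i) := by
  have hsin i : sin (a i) ≠ 0 := (sin_pos_of_mem_Ioo (mem_Ioo_of_mem_openAngleSimplex ha i)).ne'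
  have hsum : a 0 + a 1 + a 2 = π := Fin.sum_univ_three a ▸ ha.2
  have hpos : 0 < cot (a 0) + cot (a 2) :=
    cot_add_cot_pos (ha.1 0) (ha.1 2) (by linarith [ha.1 1])
  have hdet := cot_mul_cot_add_eq_one (hsin 0) (hsin 1) (hsin 2) hsum
  have hd₂ : d 2 = -(d 0 + d 1) := by
    rw [Fin.sum_univ_three] at hd
    linarith
  have hsquares : ∑ i, d i ^ 2 * cot (a i) =
      (((cot (a 0) + cot (a 2)) * d 0 + cot (a 2) * d 1) ^ 2 + d 1 ^ 2) /
        (cot (a 0) + cot (a 2)) := by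
    rw [eq_div_iff hpos.ne', Fin.sum_univ_three, hd₂]
    linear_combination d 1 ^ 2 * hdet
  rw [hsquares]
  positivity

end AngleSimplex

section LogSinIntegral

/-- The primitive of `log ∘ sin` vanishing at `0`. On `[0, π]` it is the Lobachevsky function up
to sign and a linear term. -/
noncomputable def logSinIntegral (x : ℝ) : ℝ := ∫ t in (0 : ℝ)..x, log (sin t)

theorem continuous_logSinIntegral : Continuous logSinIntegral :=
  intervalIntegral.continuous_primitive (fun _ _ => intervalIntegrable_log_sin) 0

theorem hasDerivAt_logSinIntegral {x : ℝ} (hx : sin x ≠ 0) :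
    HasDerivAt logSinIntegral (log (sin x)) x :=
  intervalIntegral.integral_hasDerivAt_right intervalIntegrable_log_sin
    (Measurable.stronglyMeasurable (by fun_prop)).stronglyMeasurableAtFilter
    (continuous_sin.continuousAt.log hx)

theorem hasDerivAt_log_sin {x : ℝ} (hx : sin x ≠ 0) :
    HasDerivAt (fun y => log (sin y)) (cot x) x := by
  rw [cot_eq_cos_div_sin]
  exact (hasDerivAt_sin x).log hx

section Segment

theorem hasDerivAt_lineMap_apply {ι : Type*} {a p : ι → ℝ} {t : ℝ} (i : ι) :
    HasDerivAt (fun s : ℝ => AffineMap.lineMap a p s i) (p i - a i) t := by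
  simpa only [AffineMap.pi_lineMap_apply] using AffineMap.hasDerivAt_lineMap (a := a i) (b := p i)

variable {a p : Fin 3 → ℝ} {t : ℝ}

theorem hasDerivAt_sum_logSinIntegral_lineMap (ha : a ∈ openAngleSimplex) (hp : p ∈ angleSimplex)
    (ht : t ∈ Ico 0 1) :
    HasDerivAt (fun s => ∑ i, logSinIntegral (AffineMap.lineMap a p s i))
      (∑ i, (p i - a i) * log (sin (AffineMap.lineMap a p t i))) t := by
  have hmem := mem_Ioo_of_mem_openAngleSimplex (lineMap_mem_openAngleSimplex ha hp ht)
  refine HasDerivAt.fun_sum fun i _ => ?_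
  rw [mul_comm]
  exact (hasDerivAt_logSinIntegral (sin_pos_of_mem_Ioo (hmem i)).ne').comp t
    (hasDerivAt_lineMap_apply i)

theorem hasDerivAt_sum_mul_log_sin_lineMap (ha : a ∈ openAngleSimplex) (hp : p ∈ angleSimplex)
    (ht : t ∈ Ico 0 1) :
    HasDerivAt (fun s => ∑ i, (p i - a i) * log (sin (AffineMap.lineMap a p s i)))
      (∑ i, (p i - a i) ^ 2 * cot (AffineMap.lineMap a p t i)) t := by
  have hmem := mem_Ioo_of_mem_openAngleSimplex (lineMap_mem_openAngleSimplex ha hp ht)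
  refine HasDerivAt.fun_sum fun i _ => ?_
  rw [sq, mul_assoc, mul_comm _ (cot _)]
  exact ((hasDerivAt_log_sin (sin_pos_of_mem_Ioo (hmem i)).ne').comp t
    (hasDerivAt_lineMap_apply i)).const_mul _

theorem convexOn_sum_logSinIntegral_lineMap (ha : a ∈ openAngleSimplex) (hp : p ∈ angleSimplex) :
    ConvexOn ℝ (Icc 0 1) fun s : ℝ => ∑ i, logSinIntegral (AffineMap.lineMap a p s i) := by
  have hd : ∑ i, (p i - a i) = 0 := by rw [Finset.sum_sub_distrib, hp.2, ha.2, sub_self]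
  have hcont : Continuous fun s : ℝ => ∑ i, logSinIntegral (AffineMap.lineMap a p s i) := by
    have := continuous_logSinIntegral
    fun_prop
  have hIoo : interior (Icc (0 : ℝ) 1) ⊆ Ico 0 1 := by
    rw [interior_Icc]
    exact Ioo_subset_Ico_self
  refine convexOn_of_hasDerivWithinAt2_nonneg (convex_Icc 0 1) hcont.continuousOn
    (fun t ht => (hasDerivAt_sum_logSinIntegral_lineMap ha hp (hIoo ht)).hasDerivWithinAt)
    (fun t ht => (hasDerivAt_sum_mul_log_sin_lineMap ha hp (hIoo ht)).hasDerivWithinAt)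
    fun t ht => sum_sq_mul_cot_nonneg (lineMap_mem_openAngleSimplex ha hp (hIoo ht)) hd

theorem sum_sub_mul_log_sin_le (ha : a ∈ openAngleSimplex) (hp : p ∈ angleSimplex) :
    ∑ i, (p i - a i) * log (sin (a i)) ≤
      ∑ i, logSinIntegral (p i) - ∑ i, logSinIntegral (a i) := by
  have hslope := (convexOn_sum_logSinIntegral_lineMap ha hp).le_slope_of_hasDerivAt
    (left_mem_Icc.2 zero_le_one) (right_mem_Icc.2 zero_le_one) zero_lt_one
    (hasDerivAt_sum_logSinIntegral_lineMap ha hp (left_mem_Ico.2 zero_lt_one))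
  simpa [slope_def_field] using hslope

end Segment

end LogSinIntegral

section Potential

/-- The angles of the generalized triangle with logarithmic edge lengths `u`. -/
noncomputable def angExp (u : Fin 3 → ℝ) (i : Fin 3) : ℝ := ang i fun m => exp (u m)

/-- The functional whose maximum over `p ∈ angleSimplex` is the potential at `u`. -/
noncomputable def angleFunctional (u p : Fin 3 → ℝ) : ℝ := p ⬝ᵥ u - ∑ i, logSinIntegral (p i)

/-- The potential of the angles in the logarithmic edge lengths, defined as the value of
`angleFunctional u` at its maximum point, see `angleFunctional_le_anglePotential`. -/
noncomputable def anglePotential (u : Fin 3 → ℝ) : ℝ := angleFunctional u (angExp u)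

theorem angExp_mem_angleSimplex (u : Fin 3 → ℝ) : angExp u ∈ angleSimplex :=
  ⟨fun _ => ang_nonneg _ _, sum_ang fun _ => exp_pos _⟩

theorem angExp_add_const (u : Fin 3 → ℝ) (k : ℝ) : angExp (u + fun _ => k) = angExp u := by
  ext i
  have hexp : (fun m => exp (u m + k)) = exp k • fun m => exp (u m) := by
    ext m
    rw [add_comm, exp_add, Pi.smul_apply, smul_eq_mul]
  simp only [angExp, Pi.add_apply, hexp, ang_smul (exp_ne_zero k)]

theorem continuous_angExp : Continuous angExp :=
  continuous_pi fun i =>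
    (continuousOn_ang i).comp_continuous (by fun_prop) fun _ _ => exp_ne_zero _

theorem continuous_angleFunctional : Continuous fun x : (Fin 3 → ℝ) × (Fin 3 → ℝ) =>
    angleFunctional x.1 x.2 := by
  have := continuous_logSinIntegral
  unfold angleFunctional
  fun_prop

theorem continuous_anglePotential : Continuous anglePotential :=
  continuous_angleFunctional.comp (continuous_id.prodMk continuous_angExp)

theorem angleFunctional_add_left (u v p : Fin 3 → ℝ) :
    angleFunctional (u + v) p = angleFunctional u p + p ⬝ᵥ v := by
  rw [angleFunctional, angleFunctional, dotProduct_add]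
  ring

theorem anglePotential_add_const (u : Fin 3 → ℝ) (k : ℝ) :
    anglePotential (u + fun _ => k) = anglePotential u + k * π := by
  have hdot : angExp u ⬝ᵥ (fun _ => k) = k * π := by
    rw [dotProduct, ← Finset.sum_mul, (angExp_mem_angleSimplex u).2, mul_comm]
  rw [anglePotential, angExp_add_const, angleFunctional_add_left, hdot, anglePotential]

theorem angleFunctional_le_of_isTriangle {u p : Fin 3 → ℝ} (hu : IsTriangle fun m => exp (u m))
    (hp : p ∈ angleSimplex) : angleFunctional u p ≤ anglePotential u := by
  obtain ⟨K, hK, hsin⟩ := hu.exists_sin_ang_eq_mul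
  have ha : angExp u ∈ openAngleSimplex := ⟨fun i => (hu.ang_mem_Ioo i).1, hu.sum_ang⟩
  have hlog i : log (sin (angExp u i)) = log K + u i := by
    rw [angExp, hsin, log_mul hK.ne' (exp_ne_zero _), log_exp]
  have hdot : ∑ i, (p i - angExp u i) * log (sin (angExp u i)) = p ⬝ᵥ u - angExp u ⬝ᵥ u := by
    simp only [hlog, mul_add, Finset.sum_add_distrib, ← Finset.sum_mul, Finset.sum_sub_distrib,
      hp.2, ha.2, sub_self, zero_add, sub_mul, dotProduct]
  have htangent := sum_sub_mul_log_sin_le ha hp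
  rw [anglePotential, angleFunctional, angleFunctional]
  linarith

theorem isTriangle_exp_update {u : Fin 3 → ℝ} {i : Fin 3} {t : ℝ} (h₁ : u (i + 1) < t)
    (h₂ : u (i + 2) < t) (ht : exp t < exp (u (i + 1)) + exp (u (i + 2))) :
    IsTriangle fun m => exp (Function.update u i t m) := by
  have h₁' := exp_lt_exp.2 h₁
  have h₂' := exp_lt_exp.2 h₂
  intro j
  obtain rfl | rfl | rfl : j = i ∨ j = i + 1 ∨ j = i + 2 := by grind
  · simpa using ht
  · simp only [fin_three_add_add, ne_eq, add_eq_left, Fin.reduceEq, one_ne_zero, not_false_eq_true,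
      Function.update_of_ne, Function.update_self]
    linarith [exp_pos (u (i + 2))]
  · simp only [fin_three_add_add, ne_eq, add_eq_left, Fin.reduceEq, one_ne_zero, not_false_eq_true,
      Function.update_of_ne, Function.update_self]
    linarith [exp_pos (u (i + 1))]

theorem update_mem_closure_isTriangle {u : Fin 3 → ℝ} {i : Fin 3} {s : ℝ}
    (hs : exp s = exp (u (i + 1)) + exp (u (i + 2))) :
    Function.update u i s ∈ closure {v | IsTriangle fun m => exp (v m)} := by
  have hlt : max (u (i + 1)) (u (i + 2)) < s := by
    refine max_lt (exp_lt_exp.1 ?_) (exp_lt_exp.1 ?_) <;>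
      linarith [exp_pos (u (i + 1)), exp_pos (u (i + 2))]
  have hmaps : MapsTo (Function.update u i) (Ioo (max (u (i + 1)) (u (i + 2))) s)
      {v | IsTriangle fun m => exp (v m)} := fun t ht =>
    isTriangle_exp_update ((le_max_left _ _).trans_lt ht.1) ((le_max_right _ _).trans_lt ht.1)
      (hs ▸ exp_lt_exp.2 ht.2)
  refine hmaps.closure (continuous_const.update i continuous_id) ?_
  rw [closure_Ioo hlt.ne]
  exact right_mem_Icc.2 hlt.le

theorem angleFunctional_le_of_mem_closure {u p : Fin 3 → ℝ}
    (hu : u ∈ closure {v | IsTriangle fun m => exp (v m)}) (hp : p ∈ angleSimplex) :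
    angleFunctional u p ≤ anglePotential u :=
  le_on_closure (fun _ hv => angleFunctional_le_of_isTriangle hv hp)
    (continuous_angleFunctional.comp (Continuous.prodMk_left p)).continuousOn
    continuous_anglePotential.continuousOn hu

theorem angleFunctional_le_of_add_le {u p : Fin 3 → ℝ} {i : Fin 3}
    (hi : exp (u (i + 1)) + exp (u (i + 2)) ≤ exp (u i)) (hp : p ∈ angleSimplex) :
    angleFunctional u p ≤ anglePotential u := by
  obtain ⟨s, hs⟩ : ∃ s, exp s = exp (u (i + 1)) + exp (u (i + 2)) :=
    ⟨_, exp_log (add_pos (exp_pos _) (exp_pos _))⟩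
  have hsu : s ≤ u i := exp_le_exp.1 (hs ▸ hi)
  set v := Function.update u i s with hv
  have huv : u = v + Pi.single i (u i - s) := by
    ext j
    obtain rfl | hj := eq_or_ne j i
    · simp [hv]
    · simp [hv, hj]
  have hangu : angExp u = Pi.single i π := ang_eq_single (fun _ => exp_pos _) hi
  have hangv : angExp v = Pi.single i π :=
    ang_eq_single (fun _ => exp_pos _) (by simp [hv, hs])
  have hpi : p i ≤ π := hp.2 ▸ Finset.single_le_sum (fun j _ => hp.1 j) (Finset.mem_univ i)
  calc angleFunctional u p = angleFunctional v p + p i * (u i - s) := by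
        rw [huv, angleFunctional_add_left, dotProduct_single, ← huv]
    _ ≤ anglePotential v + π * (u i - s) := by
        gcongr
        exact angleFunctional_le_of_mem_closure (update_mem_closure_isTriangle hs) hp
    _ = anglePotential u := by
        rw [anglePotential, anglePotential, hangu, hangv]
        conv_rhs => rw [huv]
        rw [angleFunctional_add_left, single_dotProduct, Pi.single_eq_same]

theorem angleFunctional_le_anglePotential (u : Fin 3 → ℝ) {p : Fin 3 → ℝ} (hp : p ∈ angleSimplex) :
    angleFunctional u p ≤ anglePotential u := by
  by_cases hu : IsTriangle fun m => exp (u m)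
  · exact angleFunctional_le_of_isTriangle hu hp
  · obtain ⟨i, hi⟩ : ∃ i, exp (u (i + 1)) + exp (u (i + 2)) ≤ exp (u i) := by
      simpa [IsTriangle] using hu
    exact angleFunctional_le_of_add_le hi hp

/-- The differential of `anglePotential`: the linear form whose coefficients are the angles. -/
noncomputable def angleForm (u : Fin 3 → ℝ) : (Fin 3 → ℝ) →L[ℝ] ℝ :=
  ∑ i, angExp u i • ContinuousLinearMap.proj i

theorem angleForm_apply (u v : Fin 3 → ℝ) : angleForm u v = angExp u ⬝ᵥ v := by
  simp [angleForm, dotProduct]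

theorem continuous_angleForm : Continuous angleForm := by
  have := continuous_angExp
  unfold angleForm
  fun_prop

theorem anglePotential_add_angleForm_le (u v : Fin 3 → ℝ) :
    anglePotential u + angleForm u (v - u) ≤ anglePotential v := by
  rw [angleForm_apply, anglePotential, ← angleFunctional_add_left, add_sub_cancel]
  exact angleFunctional_le_anglePotential v (angExp_mem_angleSimplex u)

theorem hasFDerivAt_anglePotential (u : Fin 3 → ℝ) :
    HasFDerivAt anglePotential (angleForm u) u :=
  hasFDerivAt_of_continuousAt_subgradient anglePotential_add_angleForm_le
    continuous_angleForm.continuousAt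

end Potential

theorem stmt1 : ∃ F : (Fin 3 → ℝ) → ℝ,
    ContDiff ℝ 1 F ∧ ConvexOn ℝ Set.univ F ∧
    (∀ u : Fin 3 → ℝ, ∀ i : Fin 3,
      fderiv ℝ F u (Pi.single i 1) = ang i (fun m => Real.exp (u m))) ∧
    (∀ u : Fin 3 → ℝ, ∀ k : ℝ, F (u + fun _ => k) = F u + k * Real.pi) := by
  refine ⟨anglePotential, ?contDiff, ?convex, fun u i => ?angles, anglePotential_add_const⟩
  case contDiff =>
    exact contDiff_one_of_continuous_subgradient anglePotential_add_angleForm_le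
      continuous_angleForm
  case convex =>
    exact convexOn_of_subgradient (D := fun u => (angleForm u).toLinearMap) convex_univ
      fun u _ v _ => anglePotential_add_angleForm_le u v
  case angles =>
    rw [(hasFDerivAt_anglePotential u).fderiv, angleForm_apply, dotProduct_single, mul_one, angExp]
end

section
/- The function V(x, y, z) = Λ(x) + Λ(y) + Λ(z) is smooth and strictly concave on the open simplex {(x, y, z) ∈ ℝ³ : x, y, z > 0, x + y + z = π}, extends continuously to the closed simplex {(x, y, z) ∈ ℝ³ : x, y, z ≥ 0, x + y + z = π}, and V(x, y, z) = 0 at every point of the closed simplex where at least one of the coordinates x, y, z is 0. -/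
/-- The Lobachevsky function `Λ(t) = -∫₀ᵗ log |2 sin s| ds`. -/
noncomputable def Lob (t : ℝ) : ℝ := -∫ s in (0 : ℝ)..t, Real.log |2 * Real.sin s|

/-!
The second derivative of `Λ` is `-cot`, so minus the Hessian of `V` is the quadratic form
`a p² + b q² + c r²` on the plane `p + q + r = 0`, where `a`, `b`, `c` are the cotangents of the
three angles. For the angles of a triangle, `a + b > 0` and `ab + bc + ca = 1`, so that
`(a + b) (a p² + b q² + c r²) = (a p - b q)² + r²`, and the form is positive definite. The boundary
values come from `Λ(π - t) = -Λ(t)`, which rests on `∫₀^π log (sin s) ds = -π log 2`.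
-/

section LobachevskyFunction

open Real Set MeasureTheory

theorem intervalIntegrable_log_abs_two_mul_sin (a b : ℝ) :
    IntervalIntegrable (fun s => log |2 * sin s|) volume a b := by
  have hmero : MeromorphicOn (fun s : ℝ => 2 * sin s) (uIcc a b) :=
    AnalyticOnNhd.meromorphicOn fun _ _ => by fun_prop
  simp only [log_abs]
  exact hmero.intervalIntegrable_log

theorem continuous_lob : Continuous Lob :=
  (intervalIntegral.continuous_primitive intervalIntegrable_log_abs_two_mul_sin 0).neg

theorem hasDerivAt_lob {t : ℝ} (ht : sin t ≠ 0) : HasDerivAt Lob (-log |2 * sin t|) t := by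
  have hmeas : Measurable fun s => log |2 * sin s| := by fun_prop
  have hcont : ContinuousAt (fun s => log |2 * sin s|) t :=
    ContinuousAt.log (by fun_prop) (by simpa using ht)
  exact (intervalIntegral.integral_hasDerivAt_right (intervalIntegrable_log_abs_two_mul_sin 0 t)
    hmeas.stronglyMeasurable.stronglyMeasurableAtFilter hcont).fun_neg

theorem hasDerivAt_log_abs_two_mul_sin {t : ℝ} (ht : sin t ≠ 0) :
    HasDerivAt (fun s => log |2 * sin s|) (cot t) t := by
  simp only [log_abs]
  convert ((hasDerivAt_sin t).const_mul 2).log (mul_ne_zero two_ne_zero ht) using 1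
  rw [cot_eq_cos_div_sin, mul_div_mul_left _ _ two_ne_zero]

theorem contDiffOn_lob : ContDiffOn ℝ (⊤ : ℕ∞) Lob {t | sin t ≠ 0} := by
  have hopen : IsOpen {t : ℝ | sin t ≠ 0} := isOpen_ne_fun continuous_sin continuous_const
  rw [contDiffOn_infty_iff_deriv_of_isOpen hopen]
  refine ⟨fun t ht => (hasDerivAt_lob ht).differentiableAt.differentiableWithinAt, ?_⟩
  have hlog : ContDiffOn ℝ (⊤ : ℕ∞) (fun t => -log |2 * sin t|) {t | sin t ≠ 0} := by
    simp only [log_abs]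
    exact ((contDiff_const.mul contDiff_sin).contDiffOn.log
      fun t ht => mul_ne_zero two_ne_zero ht).neg
  exact hlog.congr fun t ht => (hasDerivAt_lob ht).deriv

theorem lob_zero : Lob 0 = 0 := by
  rw [Lob, intervalIntegral.integral_same, neg_zero]

theorem lob_pi : Lob π = 0 := by
  have hsplit : ∫ s in (0 : ℝ)..π, log |2 * sin s| = ∫ s in (0 : ℝ)..π, (log 2 + log (sin s)) :=
    intervalIntegral.integral_congr_Ioo_of_le pi_pos.le fun s hs => by
      rw [log_abs, log_mul two_ne_zero (sin_pos_of_mem_Ioo hs).ne']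
  have hlogsin : IntervalIntegrable (fun s => log (sin s)) volume 0 π := intervalIntegrable_log_sin
  rw [Lob, hsplit, intervalIntegral.integral_add intervalIntegrable_const hlogsin,
    intervalIntegral.integral_const, integral_log_sin_zero_pi, smul_eq_mul]
  ring

theorem lob_pi_sub (t : ℝ) : Lob (π - t) = -Lob t := by
  have hrefl : ∫ s in (0 : ℝ)..(π - t), log |2 * sin s| = ∫ s in t..π, log |2 * sin s| := by
    simpa only [sin_pi_sub, sub_self] using
      (intervalIntegral.integral_comp_sub_left (a := t) (b := π) (fun s => log |2 * sin s|) π).symm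
  have hadd := intervalIntegral.integral_add_adjacent_intervals
    (intervalIntegrable_log_abs_two_mul_sin 0 t) (intervalIntegrable_log_abs_two_mul_sin t π)
  have hpi := lob_pi
  simp only [Lob, hrefl] at hpi ⊢
  linarith

theorem lob_add_lob_of_add_eq_pi {s t : ℝ} (h : s + t = π) : Lob s + Lob t = 0 := by
  rw [eq_sub_of_add_eq' h, lob_pi_sub, add_neg_cancel]

end LobachevskyFunction

section Cotangent

open Real

theorem cot_add_cot {x y : ℝ} (hx : sin x ≠ 0) (hy : sin y ≠ 0) :
    cot x + cot y = sin (x + y) / (sin x * sin y) := by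
  simp only [cot_eq_cos_div_sin, sin_add]
  field_simp
  ring

theorem cot_mul_cot_add_eq_one_of_add_eq_pi {x y z : ℝ} (hx : sin x ≠ 0) (hy : sin y ≠ 0)
    (hz : sin z ≠ 0) (h : x + y + z = π) :
    cot x * cot y + cot y * cot z + cot z * cot x = 1 := by
  obtain rfl : z = π - (x + y) := eq_sub_of_add_eq' h
  rw [sin_pi_sub] at hz
  simp only [cot_eq_cos_div_sin, sin_pi_sub, cos_pi_sub]
  field_simp
  rw [sin_add, cos_add]
  ring

theorem weighted_sum_sq_pos {a b c p q r : ℝ} (h : a * b + b * c + c * a = 1) (hab : 0 < a + b)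
    (hsum : p + q + r = 0) (hpq : p ≠ 0 ∨ q ≠ 0) : 0 < a * p ^ 2 + b * q ^ 2 + c * r ^ 2 := by
  obtain rfl : r = -(p + q) := eq_neg_of_add_eq_zero_right hsum
  have hsquares : (a + b) * (a * p ^ 2 + b * q ^ 2 + c * (-(p + q)) ^ 2)
      = (a * p - b * q) ^ 2 + (p + q) ^ 2 := by
    linear_combination (p + q) ^ 2 * h
  refine pos_of_mul_pos_right (hsquares ▸ ?_) hab.le
  rcases eq_or_ne (p + q) 0 with hr | hr
  · obtain rfl : p = -q := eq_neg_of_add_eq_zero_left hr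
    have hq : q ≠ 0 := by simpa only [neg_ne_zero, or_self] using hpq
    have hdiff : a * -q - b * q ≠ 0 := by
      rw [show a * -q - b * q = -((a + b) * q) by ring]
      exact neg_ne_zero.2 (mul_ne_zero hab.ne' hq)
    positivity
  · positivity

end Cotangent

section LineRestriction

open Set AffineMap

theorem strictConcaveOn_of_lineMap {𝕜 E β : Type*} [Ring 𝕜] [PartialOrder 𝕜]
    [ZeroLEOneClass 𝕜] [Nontrivial 𝕜] [AddCommGroup E] [Module 𝕜 E]
    [AddCommMonoid β] [PartialOrder β] [SMul 𝕜 β]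
    {s : Set E} {f : E → β} (hs : Convex 𝕜 s)
    (hf : ∀ x ∈ s, ∀ y ∈ s, x ≠ y → StrictConcaveOn 𝕜 (Icc (0 : 𝕜) 1) fun t => f (lineMap x y t)) :
    StrictConcaveOn 𝕜 s f := by
  refine ⟨hs, fun x hx y hy hxy a b ha hb hab => ?_⟩
  have hlt := (hf x hx y hy hxy).2 (left_mem_Icc.2 zero_le_one) (right_mem_Icc.2 zero_le_one)
    zero_ne_one ha hb hab
  have hpoint : lineMap x y b = a • x + b • y := by
    rw [lineMap_apply_module, ← eq_sub_of_add_eq hab]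
  simpa only [smul_eq_mul, mul_zero, mul_one, zero_add, lineMap_apply_zero, lineMap_apply_one,
    hpoint] using hlt

theorem strictConcaveOn_of_hasDerivAt2_neg {D : Set ℝ} (hD : Convex ℝ D) {f f' f'' : ℝ → ℝ}
    (hf : ContinuousOn f D) (hf' : ∀ t ∈ interior D, HasDerivAt f (f' t) t)
    (hf'' : ∀ t ∈ interior D, HasDerivAt f' (f'' t) t) (hneg : ∀ t ∈ interior D, f'' t < 0) :
    StrictConcaveOn ℝ D f := by
  refine strictConcaveOn_of_deriv2_neg hD hf fun t ht => ?_
  have hderiv : deriv f =ᶠ[nhds t] f' :=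
    Filter.eventually_of_mem (isOpen_interior.mem_nhds ht) fun s hs => (hf' s hs).deriv
  calc deriv^[2] f t = deriv f' t := hderiv.deriv_eq
    _ = f'' t := (hf'' t ht).deriv
    _ < 0 := hneg t ht

theorem hasDerivAt_comp_lineMap_apply {ι : Type*} {x y : ι → ℝ} {g : ℝ → ℝ} {g' t : ℝ} (i : ι)
    (hg : HasDerivAt g g' (lineMap x y t i)) :
    HasDerivAt (fun s => g (lineMap x y s i)) (g' * (y i - x i)) t := by
  simp only [pi_lineMap_apply] at hg ⊢
  exact hg.comp t hasDerivAt_lineMap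

end LineRestriction

section IdealVolume

open Real Set AffineMap

/-- The open simplex of angle triples of nondegenerate Euclidean triangles. These are also the
triples of dihedral angles at a vertex of an ideal hyperbolic tetrahedron. -/
def triangleAngles : Set (Fin 3 → ℝ) :=
  {x | (∀ i, 0 < x i) ∧ x 0 + x 1 + x 2 = π}

/-- The function `V(x₀, x₁, x₂) = Λ(x₀) + Λ(x₁) + Λ(x₂)`, which on `triangleAngles` is the volume of
the ideal hyperbolic tetrahedron with these dihedral angles. It is defined for all real triples. -/
noncomputable def idealVolume (x : Fin 3 → ℝ) : ℝ :=
  Lob (x 0) + Lob (x 1) + Lob (x 2)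

theorem convex_triangleAngles : Convex ℝ triangleAngles := by
  have hpos : Convex ℝ {x : Fin 3 → ℝ | ∀ i, 0 < x i} := by
    rw [ofPred_forall]
    exact convex_iInter fun i => (convex_Ioi 0).linear_preimage (LinearMap.proj i)
  let coordSum : (Fin 3 → ℝ) →ₗ[ℝ] ℝ := .proj 0 + .proj 1 + .proj 2
  exact hpos.inter (convex_hyperplane coordSum.isLinear π)

theorem sin_pos_of_mem_triangleAngles {x : Fin 3 → ℝ} (hx : x ∈ triangleAngles) (i : Fin 3) :
    0 < sin (x i) := by
  obtain ⟨hpos, hsum⟩ := hx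
  refine sin_pos_of_pos_of_lt_pi (hpos i) ?_
  match i with
  | 0 | 1 | 2 => linarith [hpos 0, hpos 1, hpos 2]

theorem continuous_idealVolume : Continuous idealVolume := by
  have := continuous_lob
  unfold idealVolume
  fun_prop

theorem contDiffOn_idealVolume :
    ContDiffOn ℝ (⊤ : ℕ∞) idealVolume {x | ∀ i, sin (x i) ≠ 0} := by
  have hcoord (i : Fin 3) :
      ContDiffOn ℝ (⊤ : ℕ∞) (fun x : Fin 3 → ℝ => Lob (x i)) {x | ∀ i, sin (x i) ≠ 0} :=
    contDiffOn_lob.comp (contDiff_apply ℝ ℝ i).contDiffOn fun _ hx => hx i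
  exact ((hcoord 0).add (hcoord 1)).add (hcoord 2)

theorem idealVolume_eq_zero_of_apply_eq_zero {x : Fin 3 → ℝ} (hsum : x 0 + x 1 + x 2 = π)
    (hzero : ∃ i, x i = 0) : idealVolume x = 0 := by
  obtain ⟨i, hi⟩ := hzero
  unfold idealVolume
  match i with
  | 0 => rw [hi, lob_zero, zero_add, lob_add_lob_of_add_eq_pi (by linarith)]
  | 1 => rw [hi, lob_zero, add_zero, lob_add_lob_of_add_eq_pi (by linarith)]
  | 2 => rw [hi, lob_zero, add_zero, lob_add_lob_of_add_eq_pi (by linarith)]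

theorem cot_weighted_sum_sq_pos {x v : Fin 3 → ℝ} (hx : x ∈ triangleAngles)
    (hsum : v 0 + v 1 + v 2 = 0) (hv : v ≠ 0) :
    0 < cot (x 0) * v 0 ^ 2 + cot (x 1) * v 1 ^ 2 + cot (x 2) * v 2 ^ 2 := by
  have hsin := sin_pos_of_mem_triangleAngles hx
  refine weighted_sum_sq_pos (cot_mul_cot_add_eq_one_of_add_eq_pi (hsin 0).ne' (hsin 1).ne'
    (hsin 2).ne' hx.2) ?_ hsum ?_
  · rw [cot_add_cot (hsin 0).ne' (hsin 1).ne', ← sin_pi_sub, ← eq_sub_of_add_eq' hx.2]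
    exact div_pos (hsin 2) (mul_pos (hsin 0) (hsin 1))
  · by_contra! hvanish
    obtain ⟨h0, h1⟩ := hvanish
    have h2 : v 2 = 0 := by linarith
    exact hv (funext fun i => by fin_cases i <;> assumption)

theorem hasDerivAt_idealVolume_lineMap {x y : Fin 3 → ℝ} {t : ℝ}
    (ht : ∀ i, sin (lineMap x y t i) ≠ 0) :
    HasDerivAt (fun s => idealVolume (lineMap x y s))
      (-log |2 * sin (lineMap x y t 0)| * (y 0 - x 0)
        + -log |2 * sin (lineMap x y t 1)| * (y 1 - x 1)
        + -log |2 * sin (lineMap x y t 2)| * (y 2 - x 2)) t :=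
  have hcoord (i : Fin 3) := hasDerivAt_comp_lineMap_apply i (hasDerivAt_lob (ht i))
  ((hcoord 0).add (hcoord 1)).add (hcoord 2)

theorem hasDerivAt_deriv_idealVolume_lineMap {x y : Fin 3 → ℝ} {t : ℝ}
    (ht : ∀ i, sin (lineMap x y t i) ≠ 0) :
    HasDerivAt (fun s => -log |2 * sin (lineMap x y s 0)| * (y 0 - x 0)
        + -log |2 * sin (lineMap x y s 1)| * (y 1 - x 1)
        + -log |2 * sin (lineMap x y s 2)| * (y 2 - x 2))
      (-(cot (lineMap x y t 0) * (y 0 - x 0) ^ 2 + cot (lineMap x y t 1) * (y 1 - x 1) ^ 2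
        + cot (lineMap x y t 2) * (y 2 - x 2) ^ 2)) t := by
  have hcoord (i : Fin 3) := (hasDerivAt_comp_lineMap_apply i
    (hasDerivAt_log_abs_two_mul_sin (ht i)).fun_neg).mul_const (y i - x i)
  exact (((hcoord 0).add (hcoord 1)).add (hcoord 2)).congr_deriv (by ring)

theorem strictConcaveOn_idealVolume : StrictConcaveOn ℝ triangleAngles idealVolume := by
  refine strictConcaveOn_of_lineMap convex_triangleAngles fun x hx y hy hxy => ?_
  have hmem {t : ℝ} (ht : t ∈ interior (Icc (0 : ℝ) 1)) : lineMap x y t ∈ triangleAngles :=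
    convex_triangleAngles.lineMap_mem hx hy (interior_subset ht)
  have hsin {t : ℝ} (ht : t ∈ interior (Icc (0 : ℝ) 1)) (i : Fin 3) :
      sin (lineMap x y t i) ≠ 0 :=
    (sin_pos_of_mem_triangleAngles (hmem ht) i).ne'
  have hsum : (y - x) 0 + (y - x) 1 + (y - x) 2 = 0 := by
    simp only [Pi.sub_apply]
    linarith [hx.2, hy.2]
  exact strictConcaveOn_of_hasDerivAt2_neg (convex_Icc 0 1)
    (continuous_idealVolume.comp lineMap_continuous).continuousOn
    (fun t ht => hasDerivAt_idealVolume_lineMap (hsin ht))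
    (fun t ht => hasDerivAt_deriv_idealVolume_lineMap (hsin ht))
    (fun t ht => neg_lt_zero.2 (cot_weighted_sum_sq_pos (hmem ht) hsum (sub_ne_zero.2 hxy.symm)))

end IdealVolume

theorem stmt3 :
    ContDiffOn ℝ (⊤ : ℕ∞) (fun x : Fin 3 → ℝ => Lob (x 0) + Lob (x 1) + Lob (x 2))
      {x : Fin 3 → ℝ | (∀ i, 0 < x i) ∧ x 0 + x 1 + x 2 = Real.pi} ∧
    StrictConcaveOn ℝ {x : Fin 3 → ℝ | (∀ i, 0 < x i) ∧ x 0 + x 1 + x 2 = Real.pi}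
      (fun x => Lob (x 0) + Lob (x 1) + Lob (x 2)) ∧
    ContinuousOn (fun x : Fin 3 → ℝ => Lob (x 0) + Lob (x 1) + Lob (x 2))
      {x : Fin 3 → ℝ | (∀ i, 0 ≤ x i) ∧ x 0 + x 1 + x 2 = Real.pi} ∧
    ∀ x : Fin 3 → ℝ, (∀ i, 0 ≤ x i) → x 0 + x 1 + x 2 = Real.pi →
      (∃ i, x i = 0) → Lob (x 0) + Lob (x 1) + Lob (x 2) = 0 :=
  ⟨contDiffOn_idealVolume.mono fun _ hx i => (sin_pos_of_mem_triangleAngles hx i).ne',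
    strictConcaveOn_idealVolume,
    continuous_idealVolume.continuousOn,
    fun _ _ hsum hzero => idealVolume_eq_zero_of_apply_eq_zero hsum hzero⟩
end
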